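/- arXiv:1810.05498 — 4 statements merged into one kernel-verified Lean document; each statement's English description precedes it below -/
import Mathlib

section
/- Let E be a lattice effect algebra and define x·y := ((x'∧y)⊕y')' for all x,y ∈ E. Then for all a, b ∈ E: a∧b = (a'·b)'·b. -/
/-- An effect algebra: a partial algebra (E;⊕,',0,1). The partial operation ⊕ is
modeled by a definedness predicate `D` together with a total function `add` whose
value is only meaningful on defined pairs. -/
structure EffectAlgebra (E : Type*) where
  /-- definedness of `x ⊕ y` -/
  D : E → E → Prop
  /-- the value of `x ⊕ y` (meaningful only when `D x y`) -/
  add : E → E → E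
  zero : E
  one : E
  /-- the complement `x'` -/
  compl : E → E
  /-- (E1) commutativity -/
  E1 : ∀ x y, D x y → D y x ∧ add x y = add y x
  /-- (E2) associativity -/
  E2 : ∀ x y z, D x y → D (add x y) z →
    D y z ∧ D x (add y z) ∧ add (add x y) z = add x (add y z)
  /-- (E3) existence of the complement -/
  E3a : ∀ x, D x (compl x)
  E3b : ∀ x, add x (compl x) = one
  /-- (E3) uniqueness of the complement -/
  E3c : ∀ x y, D x y → add x y = one → y = compl x
  /-- (E4) -/
  E4 : ∀ x, D x one → x = zero

/-- The induced order of an effect algebra: `a ≤ b` iff `a ⊕ c = b` for some `c`. -/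
def EffectAlgebra.le {E : Type*} (A : EffectAlgebra E) (a b : E) : Prop :=
  ∃ c, A.D a c ∧ A.add a c = b

/-- A lattice effect algebra: an effect algebra whose induced order is a lattice,
with meet `inf` and join `sup`. -/
structure LatticeEffectAlgebra (E : Type*) extends EffectAlgebra E where
  inf : E → E → E
  sup : E → E → E
  inf_le_left : ∀ a b, toEffectAlgebra.le (inf a b) a
  inf_le_right : ∀ a b, toEffectAlgebra.le (inf a b) b
  le_inf : ∀ a b c, toEffectAlgebra.le c a → toEffectAlgebra.le c b →
    toEffectAlgebra.le c (inf a b)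
  le_sup_left : ∀ a b, toEffectAlgebra.le a (sup a b)
  le_sup_right : ∀ a b, toEffectAlgebra.le b (sup a b)
  sup_le : ∀ a b c, toEffectAlgebra.le a c → toEffectAlgebra.le b c →
    toEffectAlgebra.le (sup a b) c

/-- The total operation `x·y := ((x'∧y)⊕y')'` on a lattice effect algebra
(well defined since `x'∧y ≤ y`). -/
def LatticeEffectAlgebra.prod {E : Type*} (A : LatticeEffectAlgebra E) (x y : E) : E :=
  A.compl (A.add (A.inf (A.compl x) y) (A.compl y))


namespace EffectAlgebra

variable {E : Type*} (A : EffectAlgebra E)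

theorem compl_compl (x : E) : A.compl (A.compl x) = x := by
  obtain ⟨hD, hadd⟩ := A.E1 _ _ (A.E3a x)
  exact (A.E3c _ _ hD (hadd.symm.trans (A.E3b x))).symm

theorem eq_zero_of_add_eq_left {x w : E} (hD : A.D x w) (h : A.add x w = x) : w = A.zero := by
  obtain ⟨hD', hcomm⟩ := A.E1 _ _ hD
  have hwx : A.add w x = x := hcomm.symm.trans h
  have hassoc := (A.E2 w x (A.compl x) hD' (hwx.symm ▸ A.E3a x)).2.1
  rw [A.E3b] at hassoc
  exact A.E4 w hassoc

theorem D_zero_one : A.D A.zero A.one := by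
  have h := (A.E1 _ _ (A.E3a A.one)).1
  rwa [A.E4 _ h] at h

theorem eq_zero_of_add_eq_zero {u v : E} (hD : A.D u v) (h : A.add u v = A.zero) :
    v = A.zero :=
  A.E4 v (A.E2 u v A.one hD (h.symm ▸ A.D_zero_one)).1

theorem D_zero_add_zero (x : E) : A.D x A.zero ∧ A.add x A.zero = x := by
  have h1 : A.compl A.one = A.zero := A.E4 _ (A.E1 _ _ (A.E3a A.one)).1
  have hD1 : A.D A.one A.zero := h1 ▸ A.E3a A.one
  have hadd1 : A.add A.one A.zero = A.one := h1 ▸ A.E3b A.one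
  have hx : A.add (A.compl x) x = A.one :=
    (A.E1 _ _ (A.E3a x)).2.symm.trans (A.E3b x)
  obtain ⟨hD, hD', hassoc⟩ :=
    A.E2 (A.compl x) x A.zero (A.E1 _ _ (A.E3a x)).1 (hx.symm ▸ hD1)
  rw [hx, hadd1] at hassoc
  exact ⟨hD, (A.E3c _ _ hD' hassoc.symm).trans (A.compl_compl x)⟩

theorem le_refl (x : E) : A.le x x :=
  ⟨A.zero, A.D_zero_add_zero x⟩

theorem le_antisymm {x y : E} (hxy : A.le x y) (hyx : A.le y x) : x = y := by
  obtain ⟨u, hu, rfl⟩ := hxy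
  obtain ⟨v, hv, h⟩ := hyx
  obtain ⟨huv, hxuv, hassoc⟩ := A.E2 x u v hu hv
  have hzero := A.eq_zero_of_add_eq_left hxuv (hassoc.symm.trans h)
  rw [A.eq_zero_of_add_eq_zero huv hzero] at h
  exact h.symm.trans (A.D_zero_add_zero _).2

theorem compl_add_compl {m c b : E} (hD : A.D m c) (h : A.add m c = b) :
    A.compl (A.add m (A.compl b)) = c := by
  obtain ⟨hcm, hcomm⟩ := A.E1 _ _ hD
  have hb : A.add c m = b := hcomm.symm.trans h
  obtain ⟨_, hcmb, hassoc⟩ := A.E2 c m (A.compl b) hcm (hb.symm ▸ A.E3a b)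
  rw [hb, A.E3b] at hassoc
  obtain ⟨hD', hcomm'⟩ := A.E1 _ _ hcmb
  exact (A.E3c _ _ hD' (hcomm'.symm.trans hassoc.symm)).symm

end EffectAlgebra

theorem LatticeEffectAlgebra.inf_eq_left {E : Type*} (A : LatticeEffectAlgebra E) {x y : E}
    (h : A.le x y) : A.inf x y = x :=
  A.le_antisymm (A.inf_le_left x y) (A.le_inf x y x (A.le_refl x) h)

/-- In a lattice effect algebra with `x·y := ((x'∧y)⊕y')'`, one has
`a∧b = (a'·b)'·b`. -/
theorem inf_eq_prod {E : Type*} (A : LatticeEffectAlgebra E) (a b : E) :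
    A.inf a b = A.prod (A.compl (A.prod (A.compl a) b)) b := by
  obtain ⟨c, hD, hc⟩ := A.inf_le_right a b
  obtain ⟨hD', hcomm⟩ := A.E1 _ _ hD
  have hcb : A.add c (A.inf a b) = b := hcomm.symm.trans hc
  have hinner : A.prod (A.compl a) b = c := by
    rw [LatticeEffectAlgebra.prod, A.compl_compl]
    exact A.compl_add_compl hD hc
  rw [hinner, LatticeEffectAlgebra.prod, A.compl_compl,
    A.inf_eq_left ⟨_, hD', hcb⟩, A.compl_add_compl hD' hcb]
end

section
/- Let E be a lattice effect algebra and define x·y := ((x'∧y)⊕y')' for all x,y ∈ E. Then for all a, b, c ∈ E: if a'·b' = 0 and (a·b)'·c' = 0, then b'·c' = 0, a'·(b·c)' = 0 and (a·b)·c = a·(b·c) (i.e., the condition (NG8) holds in (E;·,',0,1)). -/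
namespace EffectAlgebra

variable {E : Type*} (A : EffectAlgebra E)

theorem D_comm {x y : E} (h : A.D x y) : A.D y x := (A.E1 x y h).1

theorem add_comm {x y : E} (h : A.D x y) : A.add x y = A.add y x := (A.E1 x y h).2

theorem compl_one : A.compl A.one = A.zero :=
  A.E4 _ (A.D_comm (A.E3a A.one))

theorem compl_zero : A.compl A.zero = A.one := by
  rw [← A.compl_one, A.compl_compl]

theorem D_one_zero : A.D A.one A.zero := by
  simpa only [A.compl_one] using A.E3a A.one

theorem add_zero (x : E) : A.add x A.zero = x := by
  have hx := A.D_comm (A.E3a x)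
  have hsum : A.add (A.compl x) x = A.one := (A.add_comm hx).trans (A.E3b x)
  obtain ⟨-, hd, he⟩ := A.E2 (A.compl x) x A.zero hx (hsum ▸ A.D_one_zero)
  have hone : A.add A.one A.zero = A.one := by
    simpa only [A.compl_one] using A.E3b A.one
  rw [hsum, hone] at he
  rw [A.E3c _ _ hd he.symm, A.compl_compl]

/-- Orthogonality in terms of the induced order. -/
theorem D_iff_le_compl {x y : E} : A.D x y ↔ A.le x (A.compl y) := by
  constructor
  · intro h
    have hyx := A.D_comm h
    obtain ⟨hd, hd', he⟩ := A.E2 y x _ hyx (A.E3a (A.add y x))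
    exact ⟨_, hd, A.E3c _ _ hd' (he.symm.trans (A.E3b _))⟩
  · rintro ⟨c, hd, he⟩
    refine (A.E2 c x y (A.D_comm hd) ?_).1
    rw [← A.add_comm hd, he]
    exact A.D_comm (A.E3a y)

theorem eq_zero_of_add_eq_self {x u : E} (h : A.D x u) (he : A.add x u = x) : u = A.zero := by
  have hux := A.D_comm h
  have hsum : A.add u x = x := (A.add_comm hux).trans he
  obtain ⟨-, hd, -⟩ := A.E2 u x (A.compl x) hux (hsum.symm ▸ A.E3a x)
  rw [A.E3b] at hd
  exact A.E4 u hd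

end EffectAlgebra

namespace LatticeEffectAlgebra

variable {E : Type*} (A : LatticeEffectAlgebra E)

theorem inf_eq_left_s8 {x y : E} (h : A.le x y) : A.inf x y = x :=
  A.le_antisymm (A.inf_le_left x y) (A.le_inf x y x (A.le_refl x) h)

theorem inf_eq_right {x y : E} (h : A.le y x) : A.inf x y = y :=
  A.le_antisymm (A.inf_le_right x y) (A.le_inf x y y h (A.le_refl y))

theorem prod_eq_zero_iff {x y : E} : A.prod x y = A.zero ↔ A.D x y := by
  constructor
  · intro h
    have hone : A.add (A.inf (A.compl x) y) (A.compl y) = A.one := by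
      rw [← A.compl_zero, ← h, prod, A.compl_compl]
    have hd : A.D (A.inf (A.compl x) y) (A.compl y) := by
      rw [A.D_iff_le_compl, A.compl_compl]
      exact A.inf_le_right _ _
    have hinf : A.inf (A.compl x) y = y := by
      rw [A.E3c _ _ (A.D_comm hd) ((A.add_comm hd).symm.trans hone), A.compl_compl]
    exact A.D_comm (A.D_iff_le_compl.2 (hinf ▸ A.inf_le_left (A.compl x) y))
  · intro h
    rw [prod, A.inf_eq_right (A.D_iff_le_compl.1 (A.D_comm h)), A.E3b, A.compl_one]

/-- On elements with orthogonal complements, the product is dual to the partial sum. -/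
theorem prod_eq_compl_add {x y : E} (h : A.D (A.compl x) (A.compl y)) :
    A.prod x y = A.compl (A.add (A.compl x) (A.compl y)) := by
  rw [A.D_iff_le_compl, A.compl_compl] at h
  rw [prod, A.inf_eq_left_s8 h]

end LatticeEffectAlgebra

/-- (NG8) holds in `(E;·,',0,1)` for a lattice effect algebra `E` with
`x·y := ((x'∧y)⊕y')'`: if `a'·b' = 0` and `(a·b)'·c' = 0` then `b'·c' = 0`,
`a'·(b·c)' = 0` and `(a·b)·c = a·(b·c)`. -/
theorem ng8_holds {E : Type*} (A : LatticeEffectAlgebra E) (a b c : E)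
    (h1 : A.prod (A.compl a) (A.compl b) = A.zero)
    (h2 : A.prod (A.compl (A.prod a b)) (A.compl c) = A.zero) :
    A.prod (A.compl b) (A.compl c) = A.zero ∧
    A.prod (A.compl a) (A.compl (A.prod b c)) = A.zero ∧
    A.prod (A.prod a b) c = A.prod a (A.prod b c) := by
  rw [A.prod_eq_zero_iff] at h1 h2
  have hab := A.prod_eq_compl_add h1
  rw [hab, A.compl_compl] at h2
  obtain ⟨hbc, habc, hassoc⟩ := A.E2 _ _ _ h1 h2
  have hprod := A.prod_eq_compl_add hbc
  rw [A.prod_eq_zero_iff, A.prod_eq_zero_iff, hab, hprod, A.compl_compl]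
  refine ⟨hbc, habc, ?_⟩
  rw [A.prod_eq_compl_add, A.prod_eq_compl_add, A.compl_compl, A.compl_compl, hassoc] <;>
    rwa [A.compl_compl]
end

section
/- Let R = (R;·,',0,1) be an effect groupoid and define the relation a ≤ b iff a·b' = 0. Then for all a, b ∈ R the element (a'·b)'·b is the greatest lower bound of a and b with respect to ≤: (a'·b)'·b ≤ a, (a'·b)'·b ≤ b, and for every x ∈ R with x ≤ a and x ≤ b one has x ≤ (a'·b)'·b. -/
/-- An effect groupoid: an algebra (R;·,',0,1) of type (2,1,0,0) satisfying
(NG0)–(NG8). -/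
structure EffectGroupoid (R : Type*) where
  mul : R → R → R
  compl : R → R
  zero : R
  one : R
  /-- (NG0) -/
  ng0l : ∀ x, mul one x = x
  ng0r : ∀ x, mul x one = x
  /-- (NG1) -/
  ng1 : ∀ x, compl (compl x) = x
  /-- (NG2) -/
  ng2l : ∀ x, mul zero x = zero
  ng2r : ∀ x, mul x zero = zero
  /-- (NG3) -/
  ng3 : compl zero = one
  /-- (NG4) -/
  ng4l : ∀ x y, mul x (mul y (compl x)) = zero
  ng4r : ∀ x y, mul (mul y (compl x)) x = zero
  /-- (NG5) -/
  ng5 : ∀ x y, mul x y =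
    mul y (compl (mul (compl (mul (compl y) (compl x))) (compl x)))
  /-- (NG6) -/
  ng6a : ∀ x y, mul x (compl (mul (compl y) x)) = mul (compl (mul (compl y) x)) x
  ng6b : ∀ x y, mul (compl (mul (compl y) x)) x = mul (compl (mul (compl x) y)) y
  /-- (NG7) -/
  ng7 : ∀ x y z,
    mul (compl (mul (compl (mul x (compl y))) (compl y))) z =
    compl (mul (compl (mul (mul x z) (compl (mul y z)))) (compl (mul y z)))
  /-- (NG8) -/
  ng8 : ∀ x y z, mul (compl x) (compl y) = zero →
    mul (compl (mul x y)) (compl z) = zero →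
    mul (compl y) (compl z) = zero ∧
    mul (compl x) (compl (mul y z)) = zero ∧
    mul (mul x y) z = mul x (mul y z)

/-- Vanishing products in an effect groupoid commute. -/
theorem EffectGroupoid.mul_eq_zero_symm {R : Type*} (G : EffectGroupoid R) {u v : R}
    (h : G.mul u v = G.zero) : G.mul v u = G.zero := by
  have hv : G.mul (G.compl (G.mul (G.compl v) (G.compl u))) (G.compl u) = v := by
    rw [← G.ng6b v (G.compl u), G.ng1, h, G.ng3, G.ng0l]
  rw [← hv]
  exact G.ng4r _ _

/-- Every right multiple of `a` lies below `a`. -/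
theorem EffectGroupoid.mul_mul_compl {R : Type*} (G : EffectGroupoid R) (y a : R) :
    G.mul (G.mul y a) (G.compl a) = G.zero := by
  simpa only [G.ng1] using G.ng4r (G.compl a) y

/-- In an effect groupoid with the relation `a ≤ b` iff `a·b' = 0`, the element
`(a'·b)'·b` is the greatest lower bound of `a` and `b`. -/
theorem inf_is_glb {R : Type*} (G : EffectGroupoid R) (a b : R) :
    G.mul (G.mul (G.compl (G.mul (G.compl a) b)) b) (G.compl a) = G.zero ∧
    G.mul (G.mul (G.compl (G.mul (G.compl a) b)) b) (G.compl b) = G.zero ∧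
    ∀ x : R, G.mul x (G.compl a) = G.zero → G.mul x (G.compl b) = G.zero →
      G.mul x (G.compl (G.mul (G.compl (G.mul (G.compl a) b)) b)) = G.zero := by
  refine ⟨?_, G.mul_mul_compl _ _, fun x hxa hxb => G.mul_eq_zero_symm ?_⟩
  · rw [G.ng6b b a]
    exact G.mul_mul_compl _ _
  · have compl_one : G.compl G.one = G.zero := by rw [← G.ng3, G.ng1]
    have distrib := G.ng7 (G.compl a) (G.compl b) x
    simpa only [G.ng1, G.mul_eq_zero_symm hxa, G.mul_eq_zero_symm hxb, G.ng2l,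
      G.ng0r, G.ng0l, G.ng3, compl_one] using distrib
end

section
/- (Soundness) The groupoid-based logic L_LEA for lattice effect algebras is sound for the class of effect groupoids: for every sequent φ ⊢ ψ derivable in L_LEA, every effect groupoid R = (R;·,',0,1), and every valuation v from propositional variables to R, the interpretations ⟦φ⟧ᵥ and ⟦ψ⟧ᵥ (obtained by interpreting the connective · as the groupoid operation ·, ¬ as ', ⊥ as 0 and ⊤ as 1) satisfy ⟦φ⟧ᵥ ≤ ⟦ψ⟧ᵥ, where a ≤ b means a·b' = 0 (the induced order of the corresponding lattice effect algebra 𝔼(R)). -/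
/-- Formulas of the groupoid-based logic L_LEA over propositional variables `V`. -/
inductive Fml (V : Type*) : Type _ where
  | var : V → Fml V
  | mul : Fml V → Fml V → Fml V
  | neg : Fml V → Fml V
  | bot : Fml V
  | top : Fml V

/-- The abbreviation χ(φ,ψ) := ¬(¬(φ·¬ψ)·¬ψ) used in the rule (mds). -/
def Fml.chi {V : Type*} (φ ψ : Fml V) : Fml V :=
  .neg (.mul (.neg (.mul φ (.neg ψ))) (.neg ψ))

/-- Derivable sequents `φ ⊢ ψ` of the sequent calculus L_LEA. -/
inductive Der {V : Type*} : Fml V → Fml V → Prop where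
  | negr  : ∀ φ ψ, Der φ (.neg ψ) → Der ψ (.neg φ)
  | dn1   : ∀ φ, Der (.neg (.neg φ)) φ
  | dn2   : ∀ φ, Der φ (.neg (.neg φ))
  | itm1  : ∀ φ ψ μ, Der φ ψ → Der ψ φ → Der (.mul φ μ) (.mul ψ μ)
  | itm2  : ∀ φ ψ μ, Der φ ψ → Der ψ φ → Der (.mul μ φ) (.mul μ ψ)
  | mbot  : ∀ φ ψ, Der (.mul φ (.neg ψ)) .bot → Der φ ψ
  | botm  : ∀ φ ψ, Der φ ψ → Der (.mul φ (.neg ψ)) .bot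
  | onel1 : ∀ φ, Der (.mul .top φ) φ
  | onel2 : ∀ φ, Der φ (.mul .top φ)
  | oner1 : ∀ φ, Der (.mul φ .top) φ
  | oner2 : ∀ φ, Der φ (.mul φ .top)
  | zerol1 : ∀ φ, Der (.mul .bot φ) .bot
  | zerol2 : ∀ φ, Der .bot (.mul .bot φ)
  | zeror1 : ∀ φ, Der (.mul φ .bot) .bot
  | zeror2 : ∀ φ, Der .bot (.mul φ .bot)
  | ol1  : ∀ φ ψ, Der .bot (.mul φ (.mul ψ (.neg φ)))
  | ol2  : ∀ φ ψ, Der (.mul φ (.mul ψ (.neg φ))) .bot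
  | or1  : ∀ φ ψ, Der .bot (.mul (.mul ψ (.neg φ)) φ)
  | or2  : ∀ φ ψ, Der (.mul (.mul ψ (.neg φ)) φ) .bot
  | cm1  : ∀ φ ψ, Der (.mul φ (.neg (.mul (.neg ψ) φ))) (.mul (.neg (.mul (.neg ψ) φ)) φ)
  | cm2  : ∀ φ ψ, Der (.mul (.neg (.mul (.neg ψ) φ)) φ) (.mul φ (.neg (.mul (.neg ψ) φ)))
  | mc1  : ∀ φ ψ, Der (.mul (.neg (.mul (.neg ψ) φ)) φ) (.mul (.neg (.mul (.neg φ) ψ)) ψ)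
  | mc2  : ∀ φ ψ, Der (.mul (.neg (.mul (.neg φ) ψ)) ψ) (.mul (.neg (.mul (.neg ψ) φ)) φ)
  | ocm1 : ∀ φ ψ, Der (.mul φ ψ) (.mul ψ (.neg (.mul (.neg (.mul (.neg ψ) (.neg φ))) (.neg φ))))
  | ocm2 : ∀ φ ψ, Der (.mul ψ (.neg (.mul (.neg (.mul (.neg ψ) (.neg φ))) (.neg φ)))) (.mul φ ψ)
  | mds1 : ∀ φ ψ μ, Der (.mul (Fml.chi φ ψ) μ) (Fml.chi (.mul φ μ) (.mul ψ μ))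
  | mds2 : ∀ φ ψ μ, Der (Fml.chi (.mul φ μ) (.mul ψ μ)) (.mul (Fml.chi φ ψ) μ)
  | cut  : ∀ φ ψ χ, Der φ ψ → Der ψ χ → Der φ χ
  | ass1 : ∀ φ ψ μ, Der (.neg φ) ψ → Der (.neg (.mul φ ψ)) μ → Der (.neg ψ) μ
  | ass2 : ∀ φ ψ μ, Der (.neg φ) ψ → Der (.neg (.mul φ ψ)) μ → Der (.neg φ) (.mul ψ μ)
  | ass3a : ∀ φ ψ μ, Der (.neg φ) ψ → Der (.neg (.mul φ ψ)) μ →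
      Der (.mul (.mul φ ψ) μ) (.mul φ (.mul ψ μ))
  | ass3b : ∀ φ ψ μ, Der (.neg φ) ψ → Der (.neg (.mul φ ψ)) μ →
      Der (.mul φ (.mul ψ μ)) (.mul (.mul φ ψ) μ)

/-- Interpretation of a formula in an effect groupoid under a valuation `v`. -/
def interp {V R : Type*} (G : EffectGroupoid R) (v : V → R) : Fml V → R
  | .var p => v p
  | .mul φ ψ => G.mul (interp G v φ) (interp G v ψ)
  | .neg φ => G.compl (interp G v φ)
  | .bot => G.zero
  | .top => G.one

namespace EffectGroupoid

variable {R : Type*} (G : EffectGroupoid R)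

theorem mul_compl_self (x : R) : G.mul x (G.compl x) = G.zero := by
  simpa only [G.ng0l] using G.ng4l x G.one

variable {G}

/-- If `y' · x = 0`, then `x` is recovered from `y` by the divisibility law (NG6). -/
theorem eq_of_compl_mul_eq_zero {x y : R} (h : G.mul (G.compl y) x = G.zero) :
    x = G.mul (G.compl (G.mul (G.compl x) y)) y := by
  simpa only [h, G.ng3, G.ng0l] using G.ng6b x y

theorem mul_eq_zero_symm_s18 {x y : R} (h : G.mul x y = G.zero) : G.mul y x = G.zero := by
  have hy : y = G.mul (G.compl (G.mul (G.compl y) (G.compl x))) (G.compl x) :=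
    eq_of_compl_mul_eq_zero (by rwa [G.ng1])
  rw [hy]
  exact G.ng4r _ _

/-- Antisymmetry of the induced order. -/
theorem le_antisymm {x y : R} (hxy : G.mul x (G.compl y) = G.zero)
    (hyx : G.mul y (G.compl x) = G.zero) : x = y := by
  simpa only [mul_eq_zero_symm_s18 hyx, G.ng3, G.ng0l] using
    eq_of_compl_mul_eq_zero (mul_eq_zero_symm_s18 hxy)

/-- Transitivity of the induced order. -/
theorem le_trans {x y z : R} (hxy : G.mul x (G.compl y) = G.zero)
    (hyz : G.mul y (G.compl z) = G.zero) : G.mul x (G.compl z) = G.zero := by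
  have hy : G.compl y = G.mul (G.compl (G.mul y (G.compl x))) (G.compl x) := by
    have hyx : G.mul (G.compl (G.compl x)) (G.compl y) = G.zero := by rwa [G.ng1]
    simpa only [G.ng1 y] using eq_of_compl_mul_eq_zero hyx
  have h := (G.ng8 (G.compl (G.mul y (G.compl x))) (G.compl x) z
    (by simpa only [G.ng1] using G.ng4r x y) (by rwa [← hy, G.ng1])).1
  rwa [G.ng1] at h

end EffectGroupoid

open EffectGroupoid in
/-- (Soundness) For every sequent `φ ⊢ ψ` derivable in L_LEA, every effect groupoid
`R` and every valuation `v`, one has `⟦φ⟧ᵥ ≤ ⟦ψ⟧ᵥ`, where `a ≤ b` means `a·b' = 0`. -/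
theorem soundness {V R : Type*} (G : EffectGroupoid R) (v : V → R) (φ ψ : Fml V)
    (h : Der φ ψ) :
    G.mul (interp G v φ) (G.compl (interp G v ψ)) = G.zero := by
  induction h with
  | negr φ ψ _ ih =>
    simp only [interp, G.ng1] at ih ⊢
    exact mul_eq_zero_symm_s18 ih
  | itm1 φ ψ μ _ _ ih₁ ih₂ =>
    simp only [interp, le_antisymm ih₁ ih₂, mul_compl_self]
  | itm2 φ ψ μ _ _ ih₁ ih₂ =>
    simp only [interp, le_antisymm ih₁ ih₂, mul_compl_self]
  | mbot φ ψ _ ih => simpa only [interp, G.ng3, G.ng0r] using ih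
  | botm φ ψ _ ih => simpa only [interp, G.ng3, G.ng0r] using ih
  | cut φ ψ χ _ _ ih₁ ih₂ => exact le_trans ih₁ ih₂
  | ass1 φ ψ μ _ _ ih₁ ih₂ => exact (G.ng8 _ _ _ ih₁ ih₂).1
  | ass2 φ ψ μ _ _ ih₁ ih₂ => exact (G.ng8 _ _ _ ih₁ ih₂).2.1
  | ass3a φ ψ μ _ _ ih₁ ih₂ =>
    simp only [interp, (G.ng8 _ _ _ ih₁ ih₂).2.2, mul_compl_self]
  | ass3b φ ψ μ _ _ ih₁ ih₂ =>
    simp only [interp, (G.ng8 _ _ _ ih₁ ih₂).2.2, mul_compl_self]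
  | cm1 φ ψ => simp only [interp, G.ng6a, mul_compl_self]
  | cm2 φ ψ => simp only [interp, G.ng6a, mul_compl_self]
  | mc1 φ ψ =>
    simp only [interp]
    rw [G.ng6b, mul_compl_self]
  | mc2 φ ψ =>
    simp only [interp]
    rw [G.ng6b, mul_compl_self]
  | ocm1 φ ψ =>
    simp only [interp]
    rw [← G.ng5, mul_compl_self]
  | ocm2 φ ψ =>
    simp only [interp]
    rw [← G.ng5, mul_compl_self]
  | mds1 φ ψ μ =>
    simp only [interp, Fml.chi]
    rw [← G.ng7, mul_compl_self]
  | mds2 φ ψ μ =>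
    simp only [interp, Fml.chi]
    rw [← G.ng7, mul_compl_self]
  | _ =>
    simp only [interp, G.ng0l, G.ng0r, G.ng1, G.ng2l, G.ng2r, G.ng4l, G.ng4r,
      mul_compl_self]
end
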